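/- Let α ∈ (0, √(1−Θ₀)). There exist C > 0 and h₀ > 0 such that, for all h ∈ (0,h₀) and every eigenpair (λ,ψ) of the magnetic Neumann Laplacian L_h with λ ≤ Θ₀ h + o(h), one has ∫_Ω exp(2α·dist(x,∂Ω)/h^{1/2}) |ψ(x)|² dx ≤ C ‖ψ‖². -/

import Mathlib

noncomputable section

open MeasureTheory Filter Topology Asymptotics

abbrev E3 := EuclideanSpace ℝ (Fin 3)

/-- `j`-th component of the magnetic gradient `(-i h ∇ - A) ψ`. -/
def magD (A : E3 → E3) (h : ℝ) (ψ : E3 → ℂ) (j : Fin 3) (x : E3) : ℂ :=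
  -(Complex.I * h) * fderiv ℝ ψ x (EuclideanSpace.single j 1) - (A x j : ℂ) * ψ x

/-- Magnetic quadratic form (energy) on a set `Ω`. -/
def magEnergy (Ω : Set E3) (A : E3 → E3) (h : ℝ) (ψ : E3 → ℂ) : ℝ :=
  ∫ x in Ω, ∑ j : Fin 3, ‖magD A h ψ j x‖ ^ 2

def l2sq (Ω : Set E3) (ψ : E3 → ℂ) : ℝ := ∫ x in Ω, ‖ψ x‖ ^ 2

/-- Sesquilinear magnetic form. -/
def magFormC (Ω : Set E3) (A : E3 → E3) (h : ℝ) (ψ φ : E3 → ℂ) : ℂ :=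
  ∫ x in Ω, ∑ j : Fin 3, magD A h ψ j x * starRingEnd ℂ (magD A h φ j x)

def l2ipC (Ω : Set E3) (ψ φ : E3 → ℂ) : ℂ :=
  ∫ x in Ω, ψ x * starRingEnd ℂ (φ x)

/-- `curl A = e₃`. -/
def HasUnitCurl (A : E3 → E3) : Prop :=
  ∀ x : E3,
    fderiv ℝ (fun y => A y 2) x (EuclideanSpace.single 1 1)
      - fderiv ℝ (fun y => A y 1) x (EuclideanSpace.single 2 1) = 0 ∧
    fderiv ℝ (fun y => A y 0) x (EuclideanSpace.single 2 1)
      - fderiv ℝ (fun y => A y 2) x (EuclideanSpace.single 0 1) = 0 ∧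
    fderiv ℝ (fun y => A y 1) x (EuclideanSpace.single 0 1)
      - fderiv ℝ (fun y => A y 0) x (EuclideanSpace.single 1 1) = 1

/-- Form domain: smooth up to the boundary, Dirichlet condition on `D`. -/
def InFormDomain (Ω D : Set E3) (ψ : E3 → ℂ) : Prop :=
  ContDiffOn ℝ (⊤ : ℕ∞) ψ (closure Ω) ∧ ∀ x ∈ D, ψ x = 0

/-- `n`-th min-max level (`n ≥ 1`) of the magnetic quadratic form, with the natural
(Neumann) condition on `∂Ω \ D` and Dirichlet condition on `D`. -/
def nthEV (Ω D : Set E3) (A : E3 → E3) (h : ℝ) (n : ℕ) : ℝ :=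
  sInf { μ : ℝ | ∃ V : Submodule ℂ (E3 → ℂ), Module.finrank ℂ V = n ∧
    (∀ ψ ∈ V, InFormDomain Ω D ψ) ∧
    μ = sSup ((fun ψ => magEnergy Ω A h ψ / l2sq Ω ψ) '' {ψ : E3 → ℂ | ψ ∈ V ∧ ψ ≠ 0}) }

/-- Weak eigenpair for the magnetic Laplacian with Dirichlet condition on `D` and
(natural) magnetic Neumann condition on the rest of the boundary. -/
def IsMagEigenpair (Ω D : Set E3) (A : E3 → E3) (h lam : ℝ) (ψ : E3 → ℂ) : Prop :=
  ψ ≠ 0 ∧ InFormDomain Ω D ψ ∧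
  ∀ φ : E3 → ℂ, InFormDomain Ω D φ →
    magFormC Ω A h ψ φ = (lam : ℂ) * l2ipC Ω ψ φ

/-- Lowest eigenvalue of the de Gennes operator (Neumann realization of
`-∂_t² + (ξ - t)²` on `L²(ℝ₊)`), defined through its quadratic form. -/
def deGennes (ξ : ℝ) : ℝ :=
  sInf { μ : ℝ | ∃ u : ℝ → ℝ, ContDiff ℝ (⊤ : ℕ∞) u ∧ HasCompactSupport u ∧
    (∫ t in Set.Ioi (0:ℝ), u t ^ 2) = 1 ∧
    μ = ∫ t in Set.Ioi (0:ℝ), (deriv u t ^ 2 + (ξ - t) ^ 2 * u t ^ 2) }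

def Theta0 : ℝ := sInf (Set.range deGennes)

/-- Lowest eigenvalue of the Montgomery operator `-∂_t² + (ξ - t²/2)²` on `L²(ℝ)`. -/
def montgomery (ξ : ℝ) : ℝ :=
  sInf { μ : ℝ | ∃ u : ℝ → ℝ, ContDiff ℝ (⊤ : ℕ∞) u ∧ HasCompactSupport u ∧
    (∫ t : ℝ, u t ^ 2) = 1 ∧
    μ = ∫ t : ℝ, (deriv u t ^ 2 + (ξ - t ^ 2 / 2) ^ 2 * u t ^ 2) }

def Theta0M : ℝ := sInf (Set.range montgomery)

/-- `Ω` is a sublevel set of a smooth function with nonvanishing gradient on `∂Ω`. -/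
def HasSmoothBoundary (Ω : Set E3) : Prop :=
  ∃ f : E3 → ℝ, ContDiff ℝ (⊤ : ℕ∞) f ∧ Ω = f ⁻¹' Set.Iio 0 ∧
    ∀ x ∈ frontier Ω, gradient f x ≠ 0

/-- `n` is the outward unit normal field of `Ω` along `∂Ω`. -/
def IsOutwardNormal (Ω : Set E3) (n : E3 → E3) : Prop :=
  ∃ f : E3 → ℝ, ContDiff ℝ (⊤ : ℕ∞) f ∧ Ω = f ⁻¹' Set.Iio 0 ∧
    (∀ x ∈ frontier Ω, gradient f x ≠ 0) ∧
    ∀ x ∈ frontier Ω, n x = ‖gradient f x‖⁻¹ • gradient f x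

/-- The function `∂Ω ∋ x ↦ e₃ · n(x)` vanishes (exactly) linearly on `Γ`. -/
def VanishesLinearlyOn (Ω Γ : Set E3) (n : E3 → E3) : Prop :=
  ∃ c > 0, ∀ x ∈ frontier Ω, c * Metric.infDist x Γ ≤ |n x 2|

lemma agm_int_div (g : E3 → ℝ) (hg : ContDiff ℝ 1 g) (hc : HasCompactSupport g) (v : E3) :
    Integrable (fun x => fderiv ℝ g x v) ∧ ∫ x, fderiv ℝ g x v = 0 := by
  have hi : Integrable (fun x => fderiv ℝ g x v) := by
    apply Continuous.integrable_of_hasCompactSupport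
    · exact (hg.continuous_fderiv (by simp)).clm_apply continuous_const
    · exact hc.fderiv_apply ℝ v
  have hgi : Integrable g := hg.continuous.integrable_of_hasCompactSupport hc
  refine ⟨hi, ?_⟩
  have := integral_mul_fderiv_eq_neg_fderiv_mul_of_integrable (μ := (volume : Measure E3))
    (f := fun _ => (1:ℝ)) (g := g) (v := v) (by simp) (by simpa using hi) (by simpa using hgi)
    (fun x _ => by fun_prop) (fun x _ => (hg.differentiable (by simp)) x)
  simpa using this

lemma agm_magD_cont (A : E3 → E3) (hA : Continuous A) (h : ℝ) (u : E3 → ℂ)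
    (hu : ContDiff ℝ 1 u) (j : Fin 3) : Continuous (magD A h u j) := by
  have h1 : Continuous (fun x => fderiv ℝ u x (EuclideanSpace.single j 1)) :=
    (hu.continuous_fderiv (by simp)).clm_apply continuous_const
  have h2 : Continuous (fun x => (A x j)) := by fun_prop
  have h3 := hu.continuous
  unfold magD
  fun_prop

lemma agm_energy_integrable (A : E3 → E3) (hA : Continuous A) (h : ℝ) (u : E3 → ℂ)
    (hu : ContDiff ℝ 1 u) (hc : HasCompactSupport u) :
    Integrable (fun x => ∑ j : Fin 3, ‖magD A h u j x‖ ^ 2) := by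
  refine integrable_finsetSum _ fun j _ => ?_
  apply Continuous.integrable_of_hasCompactSupport
  · have := agm_magD_cont A hA h u hu j
    fun_prop
  · refine HasCompactSupport.intro hc (fun x hx => ?_)
    have h1 : fderiv ℝ u x = 0 :=
      image_eq_zero_of_notMem_tsupport (fun h => hx (tsupport_fderiv_subset ℝ h))
    have h2 : u x = 0 := image_eq_zero_of_notMem_tsupport hx
    simp [magD, h1, h2]

lemma agm_fderiv_re (u : E3 → ℂ) (hu : Differentiable ℝ u) (x v : E3) :
    fderiv ℝ (fun y => (u y).re) x v = (fderiv ℝ u x v).re := by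
  have := (Complex.reCLM.hasFDerivAt (x := u x)).comp x (hu x).hasFDerivAt
  have h2 : HasFDerivAt (fun y => (u y).re) (Complex.reCLM.comp (fderiv ℝ u x)) x := this
  rw [h2.fderiv]; simp

lemma agm_fderiv_im (u : E3 → ℂ) (hu : Differentiable ℝ u) (x v : E3) :
    fderiv ℝ (fun y => (u y).im) x v = (fderiv ℝ u x v).im := by
  have := (Complex.imCLM.hasFDerivAt (x := u x)).comp x (hu x).hasFDerivAt
  have h2 : HasFDerivAt (fun y => (u y).im) (Complex.imCLM.comp (fderiv ℝ u x)) x := this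
  rw [h2.fderiv]; simp

lemma agm_fderiv_mul (f g : E3 → ℝ) (x v : E3) (hf : DifferentiableAt ℝ f x)
    (hg : DifferentiableAt ℝ g x) :
    fderiv ℝ (fun y => f y * g y) x v = fderiv ℝ f x v * g x + f x * fderiv ℝ g x v := by
  rw [fderiv_fun_mul hf hg]
  simp; ring

lemma agm_symm (a : E3 → ℝ) (ha : ContDiff ℝ 2 a) (x v w : E3) :
    fderiv ℝ (fun y => fderiv ℝ a y w) x v = fderiv ℝ (fun y => fderiv ℝ a y v) x w := by
  have hd : DifferentiableAt ℝ (fderiv ℝ a) x :=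
    (ha.fderiv_right (m := 1) (by norm_num)).differentiable (by simp) x
  have key : ∀ v w : E3, fderiv ℝ (fun y => fderiv ℝ a y w) x v = fderiv ℝ (fderiv ℝ a) x v w := by
    intro v w
    rw [fderiv_clm_apply hd (by fun_prop)]
    simp
  rw [key, key]
  exact (ha.contDiffAt (x := x)).isSymmSndFDerivAt (by simp) v w

/-- Interior lower bound for compactly supported functions. -/
lemma agm_garding (A : E3 → E3) (hA : ContDiff ℝ (⊤ : ℕ∞) A) (hcurl : HasUnitCurl A)
    (h : ℝ) (u : E3 → ℂ) (hu : ContDiff ℝ (⊤ : ℕ∞) u) (hc : HasCompactSupport u) :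
    h * ∫ x, ‖u x‖ ^ 2 ≤ ∫ x, ∑ j : Fin 3, ‖magD A h u j x‖ ^ 2 := by
  set e0 : E3 := EuclideanSpace.single 0 1 with he0
  set e1 : E3 := EuclideanSpace.single 1 1 with he1
  have hu2 : ContDiff ℝ 2 u := contDiff_infty.1 hu 2
  have hA1 : ContDiff ℝ 1 A := hA.of_le (by exact_mod_cast le_top)
  have hud : Differentiable ℝ u := hu2.differentiable (by simp)
  set a : E3 → ℝ := fun x => (u x).re with ha
  set b : E3 → ℝ := fun x => (u x).im with hb
  have ha2 : ContDiff ℝ 2 a := Complex.reCLM.contDiff.comp hu2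
  have hb2 : ContDiff ℝ 2 b := Complex.imCLM.contDiff.comp hu2
  have hb1 : ContDiff ℝ 1 b := hb2.of_le (by norm_num)
  have ha1 : ContDiff ℝ 1 a := ha2.of_le (by norm_num)
  have hda : ∀ v, ContDiff ℝ 1 (fun x => fderiv ℝ a x v) := fun v =>
    (ha2.fderiv_right (m := 1) (by norm_num)).clm_apply contDiff_const
  have hAj : ∀ j, ContDiff ℝ 1 (fun x => A x j) := fun j => by fun_prop
  set n2 : E3 → ℝ := fun x => a x * a x + b x * b x with hn2
  have hn21 : ContDiff ℝ 1 n2 := (ha1.mul ha1).add (hb1.mul hb1)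
  have zero_of : ∀ x, x ∉ tsupport u → a x = 0 ∧ b x = 0 := by
    intro x hx
    have h2 : u x = 0 := image_eq_zero_of_notMem_tsupport hx
    simp [ha, hb, h2]
  have hc1 : ∀ v, HasCompactSupport (fun x => b x * fderiv ℝ a x v) := fun v =>
    HasCompactSupport.intro hc fun x hx => by simp [zero_of x hx]
  have hc2 : ∀ j, HasCompactSupport (fun x => A x j * n2 x) := fun j =>
    HasCompactSupport.intro hc fun x hx => by simp [zero_of x hx, hn2]
  have I1 := agm_int_div _ (hb1.mul (hda e1)) (hc1 e1) e0
  have I2 := agm_int_div _ (hb1.mul (hda e0)) (hc1 e0) e1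
  have I3 := agm_int_div _ ((hAj 1).mul hn21) (hc2 1) e0
  have I4 := agm_int_div _ ((hAj 0).mul hn21) (hc2 0) e1
  have hcn : HasCompactSupport (fun x => ‖u x‖ ^ 2) :=
    HasCompactSupport.intro hc fun x hx => by
      simp [image_eq_zero_of_notMem_tsupport hx]
  have I5 : Integrable (fun x => ‖u x‖ ^ 2) :=
    (by have := hu2.continuous; fun_prop : Continuous (fun x => ‖u x‖ ^ 2)).integrable_of_hasCompactSupport hcn
  have J1 := ((I1.1.sub I2.1).const_mul (2 * h ^ 2))
  have J2 := ((I3.1.sub I4.1).const_mul h)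
  have J3 := I5.const_mul h
  have E : h * ∫ x, ‖u x‖ ^ 2 = ∫ x, (h * ‖u x‖ ^ 2
      - 2 * h ^ 2 * (fderiv ℝ (fun x => b x * fderiv ℝ a x e1) x e0
        - fderiv ℝ (fun x => b x * fderiv ℝ a x e0) x e1))
      - h * (fderiv ℝ (fun x => A x 1 * n2 x) x e0 - fderiv ℝ (fun x => A x 0 * n2 x) x e1) := by
    have K1 := integral_sub (J3.sub J1) J2
    have K2 := integral_sub J3 J1
    simp only [Pi.sub_apply] at K1 K2
    rw [K1, K2, integral_const_mul, integral_const_mul, integral_const_mul,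
      integral_sub I1.1 I2.1, integral_sub I3.1 I4.1, I1.2, I2.2, I3.2, I4.2]
    ring
  rw [E]
  refine integral_mono ((J3.sub J1).sub J2)
    (agm_energy_integrable A hA.continuous h u (hu2.of_le (by norm_num)) hc) ?_
  intro x
  simp only
  have dA := fun j => (hAj j).differentiable (by simp) x
  have da := ha1.differentiable (by simp) x
  have db := hb1.differentiable (by simp) x
  have dda := fun v => (hda v).differentiable (by simp) x
  have dn := hn21.differentiable (by simp) x
  have F : ∀ v, fderiv ℝ n2 x v = 2 * a x * fderiv ℝ a x v + 2 * b x * fderiv ℝ b x v := by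
    intro v
    have : fderiv ℝ n2 x v = fderiv ℝ (fun y => a y * a y) x v + fderiv ℝ (fun y => b y * b y) x v := by
      rw [hn2, fderiv_fun_add (f := fun y => a y * a y) (g := fun y => b y * b y) (da.mul da) (db.mul db)]; rfl
    rw [this, agm_fderiv_mul _ _ _ _ da da, agm_fderiv_mul _ _ _ _ db db]; ring
  rw [agm_fderiv_mul _ _ _ _ db (dda e1), agm_fderiv_mul _ _ _ _ db (dda e0),
    agm_fderiv_mul _ _ _ _ (dA 1) dn, agm_fderiv_mul _ _ _ _ (dA 0) dn, F, F,
    agm_symm a ha2 x e0 e1]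
  have hB := (hcurl x).2.2
  rw [← he0, ← he1] at hB
  simp only [ha, hb, agm_fderiv_re u hud, agm_fderiv_im u hud]
  rw [Fin.sum_univ_three]
  have hnn : 0 ≤ ‖magD A h u 2 x‖ ^ 2 := by positivity
  have e : ‖u x‖ ^ 2 = n2 x := by
    rw [← Complex.normSq_eq_norm_sq, Complex.normSq_apply]
  rw [e]
  rw [← Complex.normSq_eq_norm_sq (magD A h u 0 x), ← Complex.normSq_eq_norm_sq (magD A h u 1 x),
     Complex.normSq_apply, Complex.normSq_apply]
  simp only [magD, ← he0, ← he1, hn2, ha, hb]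
  simp
  generalize fderiv ℝ u x e0 = p at *
  generalize fderiv ℝ u x e1 = q at *
  have hB' : fderiv ℝ (fun y => (A y).ofLp 1) x e0 = 1 + fderiv ℝ (fun y => (A y).ofLp 0) x e1 := by
    linarith
  rw [hB']
  generalize fderiv ℝ (fun y => (A y).ofLp 0) x e1 = s at *
  generalize (A x).ofLp 0 = A0 at *
  generalize (A x).ofLp 1 = A1 at *
  generalize (u x).re = r at *
  generalize (u x).im = t at *
  simp [magD] at hnn
  generalize fderiv ℝ (fun y => fderiv ℝ (fun x => (u x).re) y e0) x e1 = X at *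
  nlinarith [sq_nonneg (h * p.im - A0 * r - (h * q.re + A1 * t)),
    sq_nonneg (-(h * p.re) - A0 * t + (h * q.im - A1 * r)),
    sq_nonneg (h * p.im - A0 * r + (h * q.re + A1 * t)),
    sq_nonneg (-(h * p.re) - A0 * t - (h * q.im - A1 * r))]

open ContinuousLinearMap Convolution in
lemma agm_mollify (d0 : E3 → ℝ) (hd : LipschitzWith 1 d0) (ε : ℝ) (hε : 0 < ε) :
    ∃ d : E3 → ℝ, ContDiff ℝ (⊤ : ℕ∞) d ∧ LipschitzWith 1 d ∧ ∀ x, |d x - d0 x| ≤ ε := by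
  let φ : ContDiffBump (0 : E3) := ⟨ε / 2, ε, by positivity, by linarith⟩
  have hcont : Continuous (φ.normed (volume : Measure E3)) := φ.continuous_normed
  have hcs : HasCompactSupport (φ.normed (volume : Measure E3)) := φ.hasCompactSupport_normed
  refine ⟨(φ.normed volume ⋆[lsmul ℝ ℝ, volume] d0), ?_, ?_, ?_⟩
  · exact hcs.contDiff_convolution_left _ φ.contDiff_normed hd.continuous.locallyIntegrable
  · have hI : ∀ x, Integrable (fun t => φ.normed volume t * d0 (x - t)) := by
      intro x
      apply Continuous.integrable_of_hasCompactSupport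
      · have := hd.continuous
        fun_prop
      · exact hcs.mul_right
    refine LipschitzWith.of_dist_le_mul fun x y => ?_
    simp only [convolution, lsmul_apply, smul_eq_mul, NNReal.coe_one, one_mul]
    rw [Real.dist_eq, ← integral_sub (hI x) (hI y), ← Real.norm_eq_abs]
    calc ‖∫ t, φ.normed volume t * d0 (x - t) - φ.normed volume t * d0 (y - t)‖
        ≤ ∫ t, φ.normed (volume : Measure E3) t * dist x y := by
          refine norm_integral_le_of_norm_le (φ.integrable_normed.mul_const _) ?_
          filter_upwards with t
          rw [← mul_sub, norm_mul, Real.norm_of_nonneg (φ.nonneg_normed t)]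
          refine mul_le_mul_of_nonneg_left ?_ (φ.nonneg_normed t)
          have := hd.dist_le_mul (x - t) (y - t)
          rw [dist_sub_right] at this
          simpa [Real.dist_eq] using this
      _ = dist x y := by
          rw [integral_mul_const, φ.integral_normed, one_mul]
  · intro x
    rw [← Real.dist_eq]
    refine φ.dist_normed_convolution_le hd.continuous.aestronglyMeasurable fun y hy => ?_
    have := hd.dist_le_mul y x
    have h2 : dist y x < ε := hy
    simp only [NNReal.coe_one, one_mul] at this
    linarith

lemma agm_weight (α : ℝ) (hα : 0 < α) :
    ∃ f : ℝ → ℝ, ∃ M : ℝ, 0 ≤ M ∧ ContDiff ℝ (⊤ : ℕ∞) f ∧ (∀ t ≤ 2, f t = 0) ∧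
      (∀ t, deriv f t ^ 2 ≤ α ^ 2 * f t ^ 2 + M) ∧
      (∀ t, Real.exp (2 * α * t) ≤ f t ^ 2 + Real.exp (6 * α)) := by
  let f : ℝ → ℝ := fun t => Real.smoothTransition (t - 2) * Real.exp (α * t)
  have hf : ContDiff ℝ (⊤ : ℕ∞) f :=
    (Real.smoothTransition.contDiff.comp (contDiff_id.sub contDiff_const)).mul
      (Real.contDiff_exp.comp (contDiff_const.mul contDiff_id))
  have hf0 : ∀ t ≤ 2, f t = 0 := fun t ht => by
    simp [f, Real.smoothTransition.zero_of_nonpos (show t - 2 ≤ 0 by linarith)]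
  have hf1 : ∀ t, 3 ≤ t → f t = Real.exp (α * t) := fun t ht => by
    simp [f, Real.smoothTransition.one_of_one_le (show 1 ≤ t - 2 by linarith)]
  have hdc : Continuous (fun t => deriv f t ^ 2) := by
    have : Continuous (deriv f) := hf.continuous_deriv (by simp)
    fun_prop
  obtain ⟨M, hM⟩ := (isCompact_Icc (a := (2:ℝ)) (b := 3)).bddAbove_image hdc.continuousOn
  have hM' : ∀ t ∈ Set.Icc (2:ℝ) 3, deriv f t ^ 2 ≤ M := fun t ht => hM ⟨t, ht, rfl⟩
  have hM0 : 0 ≤ M := le_trans (sq_nonneg _) (hM' 2 (by norm_num))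
  refine ⟨f, M, hM0, hf, hf0, fun t => ?_, fun t => ?_⟩
  · rcases lt_or_ge t 2 with h | h
    · have : f =ᶠ[𝓝 t] fun _ => 0 := by
        filter_upwards [Iio_mem_nhds h] with s hs using hf0 s (le_of_lt hs)
      rw [this.deriv_eq]; simp; positivity
    · rcases le_or_gt t 3 with h3 | h3
      · have := hM' t ⟨h, h3⟩
        nlinarith [sq_nonneg (α * f t)]
      · have : f =ᶠ[𝓝 t] fun t => Real.exp (α * t) := by
          filter_upwards [Ioi_mem_nhds h3] with s hs using hf1 s (le_of_lt hs)
        have hd : HasDerivAt (fun t => Real.exp (α * t)) (Real.exp (α * t) * (α * 1)) t :=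
          ((hasDerivAt_id t).const_mul α).exp
        rw [this.deriv_eq, hd.deriv, hf1 t h3.le]
        nlinarith
  · rcases le_or_gt t 3 with h3 | h3
    · have : Real.exp (2 * α * t) ≤ Real.exp (6 * α) := Real.exp_le_exp.2 (by nlinarith)
      nlinarith [sq_nonneg (f t)]
    · rw [hf1 t h3.le, ← Real.exp_nat_mul]
      have := Real.exp_pos (6 * α)
      have e : ((2:ℕ):ℝ) * (α * t) = 2 * α * t := by push_cast; ring
      rw [e]; linarith

lemma agm_sum_sq (L : E3 →L[ℝ] ℝ) :
    ∑ j : Fin 3, L (EuclideanSpace.single j 1) ^ 2 ≤ ‖L‖ ^ 2 := by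
  set v : E3 := ∑ j : Fin 3, L (EuclideanSpace.single j 1) • EuclideanSpace.single j (1:ℝ) with hv
  have h1 : L v = ∑ j : Fin 3, L (EuclideanSpace.single j 1) ^ 2 := by
    simp [hv, map_sum, sq]
  have h2 : ‖v‖ ^ 2 = ∑ j : Fin 3, L (EuclideanSpace.single j 1) ^ 2 := by
    rw [EuclideanSpace.norm_sq_eq]
    simp [hv, Fin.sum_univ_three]
  have h3 := L.le_opNorm v
  rw [← h2] at h1 ⊢
  rw [h1, Real.norm_of_nonneg (by positivity)] at h3
  rcases (norm_nonneg v).eq_or_lt with h | h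
  · rw [← h]; simp
  · have : ‖v‖ ≤ ‖L‖ := by
      by_contra hc
      push Not at hc
      nlinarith
    gcongr

lemma agm_infDist (Ω : Set E3) (hΩb : Bornology.IsBounded Ω) (x : E3) (hx : x ∈ Ω) :
    Metric.infDist x (frontier Ω) ≤ Metric.infDist x Ωᶜ := by
  have hne : (Ωᶜ).Nonempty := by
    rw [Set.nonempty_compl]
    rintro rfl
    exact NormedSpace.unbounded_univ ℝ E3 hΩb
  refine (Metric.le_infDist hne).2 fun y hy => ?_
  obtain ⟨z, hz, hzf⟩ : (segment ℝ x y ∩ frontier Ω).Nonempty := by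
    by_contra hcon
    rw [Set.not_nonempty_iff_eq_empty] at hcon
    have hp := (convex_segment (𝕜 := ℝ) x y).isPreconnected
    have hsub : segment ℝ x y ⊆ interior Ω ∪ (closure Ω)ᶜ := by
      intro z hz
      by_contra h
      rw [Set.mem_union, not_or] at h
      have : z ∈ segment ℝ x y ∩ frontier Ω := ⟨hz, by simpa using h.2, h.1⟩
      rw [hcon] at this; exact this
    obtain ⟨z, -, hz1, hz2⟩ := hp _ _ isOpen_interior isClosed_closure.isOpen_compl hsub
      ⟨x, left_mem_segment ℝ x y, (hsub (left_mem_segment ℝ x y)).resolve_right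
        fun h => h (subset_closure hx)⟩
      ⟨y, right_mem_segment ℝ x y, (hsub (right_mem_segment ℝ x y)).resolve_left
        fun h => hy (interior_subset h)⟩
    exact hz2 (subset_closure (interior_subset hz1))
  refine (Metric.infDist_le_dist_of_mem hzf).trans ?_
  have := dist_add_dist_of_mem_segment hz
  linarith [dist_nonneg (x := z) (y := y)]

lemma agm_integrableOn {F : Type*} [NormedAddCommGroup F] (Ω K : Set E3) (hK : IsCompact K)
    (hKΩ : K ⊆ Ω) (hΩ : IsOpen Ω) (f : E3 → F) (hf : ContinuousOn f Ω)
    (h0 : ∀ x ∈ Ω, x ∉ K → f x = 0) : IntegrableOn f Ω :=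
  ((hf.mono hKΩ).integrableOn_compact hK).of_forall_sdiff_eq_zero hΩ.measurableSet
    fun x hx => h0 x hx.1 hx.2

lemma agm_magD_continuousOn (Ω : Set E3) (hΩ : IsOpen Ω) (A : E3 → E3) (hA : Continuous A) (h : ℝ)
    (u : E3 → ℂ) (hu : ContDiffOn ℝ 1 u Ω) (j : Fin 3) : ContinuousOn (magD A h u j) Ω := by
  have h1 : ContinuousOn (fun x => fderiv ℝ u x (EuclideanSpace.single j 1)) Ω :=
    (hu.continuousOn_fderiv_of_isOpen hΩ (by simp)).clm_apply continuousOn_const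
  have h2 : ContinuousOn (fun x => (A x j)) Ω := by fun_prop
  have h3 := hu.continuousOn
  have h4 : ContinuousOn (fun x => (A x j : ℂ)) Ω := Complex.continuous_ofReal.comp_continuousOn h2
  unfold magD
  exact (continuousOn_const.mul h1).sub (h4.mul h3)

lemma agm_magD_mul (A : E3 → E3) (h : ℝ) (w : E3 → ℝ) (ψ : E3 → ℂ) (x : E3) (j : Fin 3)
    (hw : DifferentiableAt ℝ w x) (hψ : DifferentiableAt ℝ ψ x) :
    magD A h (fun y => (w y : ℂ) * ψ y) j x = w x * magD A h ψ j x
      - Complex.I * h * (fderiv ℝ w x (EuclideanSpace.single j 1) : ℝ) * ψ x := by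
  have hwc : HasFDerivAt (fun y => (w y : ℂ)) (Complex.ofRealCLM.comp (fderiv ℝ w x)) x :=
    (Complex.ofRealCLM.hasFDerivAt (x := w x)).comp x hw.hasFDerivAt
  have := (hwc.fun_mul hψ.hasFDerivAt).fderiv
  simp only [magD]
  rw [this]
  simp
  ring

lemma agm_pointwise (P s : ℂ) (h w d : ℝ) :
    (P * starRingEnd ℂ ((w ^ 2 : ℝ) * P - Complex.I * h * ((2 * w * d : ℝ)) * s)).re
      = ‖w * P - Complex.I * h * d * s‖ ^ 2 - h ^ 2 * (d ^ 2 * ‖s‖ ^ 2) := by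
  rw [← Complex.normSq_eq_norm_sq, ← Complex.normSq_eq_norm_sq, Complex.normSq_apply,
    Complex.normSq_apply]
  simp [← Complex.ofReal_pow]
  ring

lemma agm_local (Ω : Set E3) (hΩo : IsOpen Ω)
    (A : E3 → E3) (hA : ContDiff ℝ (⊤ : ℕ∞) A) (hcurl : HasUnitCurl A)
    (h lam : ℝ) (ψ : E3 → ℂ) (hψ : IsMagEigenpair Ω ∅ A h lam ψ)
    (w : E3 → ℝ) (hw : ContDiff ℝ (⊤ : ℕ∞) w) (hwc : HasCompactSupport w) (hws : tsupport w ⊆ Ω) :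
    h * ∫ x in Ω, w x ^ 2 * ‖ψ x‖ ^ 2 ≤ lam * (∫ x in Ω, w x ^ 2 * ‖ψ x‖ ^ 2)
      + h ^ 2 * ∫ x in Ω, ‖fderiv ℝ w x‖ ^ 2 * ‖ψ x‖ ^ 2 := by
  obtain ⟨-, ⟨hψs, -⟩, hψe⟩ := hψ
  have hψΩ : ContDiffOn ℝ (⊤ : ℕ∞) ψ Ω := hψs.mono subset_closure
  have hψ1 : ContDiffOn ℝ 1 ψ Ω := hψΩ.of_le (by exact_mod_cast le_top)
  have hw1 : ContDiff ℝ 1 w := hw.of_le (by exact_mod_cast le_top)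
  have hwC : ContDiff ℝ (⊤ : ℕ∞) (fun x => (w x : ℂ)) := Complex.ofRealCLM.contDiff.comp hw
  have hψd : ∀ x ∈ Ω, DifferentiableAt ℝ ψ x := fun x hx =>
    (hψ1.contDiffAt (hΩo.mem_nhds hx)).differentiableAt (by simp)
  have hwd : Differentiable ℝ w := hw1.differentiable (by simp)
  have w0 : ∀ x, x ∉ tsupport w → w x = 0 := fun x hx => image_eq_zero_of_notMem_tsupport hx
  have dw0 : ∀ x, x ∉ tsupport w → fderiv ℝ w x = 0 := fun x hx =>
    image_eq_zero_of_notMem_tsupport (fun h => hx (tsupport_fderiv_subset ℝ h))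
  set u : E3 → ℂ := fun x => (w x : ℂ) * ψ x with hu
  set φ : E3 → ℂ := fun x => ((w x ^ 2 : ℝ) : ℂ) * ψ x with hφ
  have htu : tsupport u ⊆ tsupport w := by
    refine closure_mono fun x hx => ?_
    simp only [Function.mem_support, hu] at hx ⊢
    intro h0; apply hx; simp [h0]
  have huc : HasCompactSupport u := HasCompactSupport.intro hwc fun x hx => by simp [hu, w0 x hx]
  have hus : ContDiff ℝ (⊤ : ℕ∞) u := by
    refine contDiff_iff_contDiffAt.2 fun x => ?_
    by_cases hx : x ∈ tsupport u
    · exact hwC.contDiffAt.mul (hψΩ.contDiffAt (hΩo.mem_nhds (hws (htu hx))))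
    · exact (contDiffAt_const (c := (0:ℂ))).congr_of_eventuallyEq
        (notMem_tsupport_iff_eventuallyEq.1 hx)
  have hφdom : InFormDomain Ω ∅ φ := by
    refine ⟨?_, by simp⟩
    have : ContDiff ℝ (⊤ : ℕ∞) (fun x => ((w x ^ 2 : ℝ) : ℂ)) :=
      Complex.ofRealCLM.contDiff.comp (hw.pow 2)
    exact this.contDiffOn.mul hψs
  have heq := congrArg Complex.re (hψe φ hφdom)
  have hu0 : ∀ x, x ∉ Ω → u x = 0 := fun x hx => by simp [hu, w0 x (fun h => hx (hws h))]
  have hG := agm_garding A hA hcurl h u hus huc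
  have e1 : ∫ x, ‖u x‖ ^ 2 = ∫ x in Ω, w x ^ 2 * ‖ψ x‖ ^ 2 := by
    rw [← setIntegral_eq_integral_of_forall_compl_eq_zero (s := Ω)
      (fun x hx => by simp [hu0 x hx])]
    refine setIntegral_congr_fun hΩo.measurableSet fun x _ => ?_
    simp [hu, mul_pow]
  have e2 : ∫ x, ∑ j : Fin 3, ‖magD A h u j x‖ ^ 2
      = ∫ x in Ω, ∑ j : Fin 3, ‖magD A h u j x‖ ^ 2 := by
    symm
    refine setIntegral_eq_integral_of_forall_compl_eq_zero fun x hx => ?_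
    have hxu : x ∉ tsupport u := fun h => hx (hws (htu h))
    have h1 : fderiv ℝ u x = 0 :=
      image_eq_zero_of_notMem_tsupport (fun h => hxu (tsupport_fderiv_subset ℝ h))
    simp [magD, h1, hu0 x hx]
  -- pointwise formula for the test function
  have hφm : ∀ x ∈ Ω, ∀ j, magD A h φ j x = ((w x ^ 2 : ℝ) : ℂ) * magD A h ψ j x
      - Complex.I * h * ((2 * w x * fderiv ℝ w x (EuclideanSpace.single j 1) : ℝ) : ℂ) * ψ x := by
    intro x hx j
    have := agm_magD_mul A h (fun y => w y ^ 2) ψ x j ((hwd x).pow 2) (hψd x hx)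
    rw [hφ, this, fderiv_fun_pow 2 (hwd x)]
    simp
  have hum : ∀ x ∈ Ω, ∀ j, magD A h u j x = (w x : ℂ) * magD A h ψ j x
      - Complex.I * h * ((fderiv ℝ w x (EuclideanSpace.single j 1) : ℝ) : ℂ) * ψ x :=
    fun x hx j => agm_magD_mul A h w ψ x j (hwd x) (hψd x hx)
  have hφ1 : ContDiffOn ℝ 1 φ Ω := (hφdom.1.mono subset_closure).of_le (by exact_mod_cast le_top)
  have hint : IntegrableOn (fun x => ∑ j : Fin 3, magD A h ψ j x * starRingEnd ℂ (magD A h φ j x)) Ω := by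
    refine agm_integrableOn Ω (tsupport w) hwc hws hΩo _ ?_ ?_
    · refine continuousOn_finsetSum _ fun j _ => ?_
      exact (agm_magD_continuousOn Ω hΩo A hA.continuous h ψ hψ1 j).mul
        (Complex.continuous_conj.comp_continuousOn
          (agm_magD_continuousOn Ω hΩo A hA.continuous h φ hφ1 j))
    · intro x hx hxw
      refine Finset.sum_eq_zero fun j _ => ?_
      rw [hφm x hx j]; simp [w0 x hxw]
  have hint2 : IntegrableOn (fun x => ψ x * starRingEnd ℂ (φ x)) Ω := by
    refine agm_integrableOn Ω (tsupport w) hwc hws hΩo _ ?_ ?_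
    · exact hψ1.continuousOn.mul (Complex.continuous_conj.comp_continuousOn hφ1.continuousOn)
    · intro x hx hxw
      simp [hφ, w0 x hxw]
  have hdwc : Continuous (fderiv ℝ w) := hw1.continuous_fderiv (by simp)
  have hint3 : IntegrableOn (fun x => ‖fderiv ℝ w x‖ ^ 2 * ‖ψ x‖ ^ 2) Ω := by
    refine agm_integrableOn Ω (tsupport w) hwc hws hΩo _ ?_ ?_
    · exact (hdwc.norm.pow 2).continuousOn.mul (hψ1.continuousOn.norm.pow 2)
    · intro x hx hxw
      simp [dw0 x hxw]
  have hint4 : IntegrableOn (fun x => ∑ j : Fin 3, ‖magD A h u j x‖ ^ 2) Ω :=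
    (agm_energy_integrable A hA.continuous h u (hus.of_le (by exact_mod_cast le_top)) huc).integrableOn
  have r1 : (magFormC Ω A h ψ φ).re
      = ∫ x in Ω, (∑ j : Fin 3, magD A h ψ j x * starRingEnd ℂ (magD A h φ j x)).re :=
    (integral_re hint).symm
  have r2 : (l2ipC Ω ψ φ).re = ∫ x in Ω, w x ^ 2 * ‖ψ x‖ ^ 2 := by
    have : (l2ipC Ω ψ φ).re = ∫ x in Ω, (ψ x * starRingEnd ℂ (φ x)).re := (integral_re hint2).symm
    rw [this]
    refine setIntegral_congr_fun hΩo.measurableSet fun x _ => ?_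
    simp only [hφ]
    rw [← Complex.normSq_eq_norm_sq, Complex.normSq_apply]
    simp [← Complex.ofReal_pow]
    ring
  rw [Complex.re_ofReal_mul, r1, r2] at heq
  rw [e1, e2] at hG
  have r3 : (∫ x in Ω, ∑ j : Fin 3, ‖magD A h u j x‖ ^ 2)
      - h ^ 2 * ∫ x in Ω, ‖fderiv ℝ w x‖ ^ 2 * ‖ψ x‖ ^ 2
      ≤ ∫ x in Ω, (∑ j : Fin 3, magD A h ψ j x * starRingEnd ℂ (magD A h φ j x)).re := by
    rw [← integral_const_mul, ← integral_sub hint4 (hint3.const_mul _)]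
    refine setIntegral_mono_on (hint4.sub (hint3.const_mul _)) hint.re hΩo.measurableSet fun x hx => ?_
    have hs := agm_sum_sq (fderiv ℝ w x)
    rw [Complex.re_sum]
    have : ∀ j : Fin 3, (magD A h ψ j x * starRingEnd ℂ (magD A h φ j x)).re
        = ‖magD A h u j x‖ ^ 2
          - h ^ 2 * (fderiv ℝ w x (EuclideanSpace.single j 1) ^ 2 * ‖ψ x‖ ^ 2) := by
      intro j
      rw [hφm x hx j, hum x hx j, agm_pointwise]
    rw [Finset.sum_congr rfl fun j _ => this j, Finset.sum_sub_distrib, ← Finset.mul_sum,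
      ← Finset.sum_mul]
    have : h ^ 2 * ((∑ j : Fin 3, fderiv ℝ w x (EuclideanSpace.single j 1) ^ 2) * ‖ψ x‖ ^ 2)
      ≤ h ^ 2 * (‖fderiv ℝ w x‖ ^ 2 * ‖ψ x‖ ^ 2) := by gcongr
    linarith
  linarith

theorem statement4
    (Ω : Set E3) (hΩo : IsOpen Ω) (hΩb : Bornology.IsBounded Ω) (hΩc : IsConnected Ω)
    (hΩsm : HasSmoothBoundary Ω)
    (A : E3 → E3) (hA : ContDiff ℝ (⊤ : ℕ∞) A) (hcurl : HasUnitCurl A)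
    (α : ℝ) (hα : α ∈ Set.Ioo 0 (Real.sqrt (1 - Theta0)))
    -- the `o(h)` in the eigenvalue bound
    (err : ℝ → ℝ) (herr : err =o[𝓝[>] (0:ℝ)] fun h => h) :
    ∃ C > (0:ℝ), ∃ h₀ > (0:ℝ), ∀ h ∈ Set.Ioo (0:ℝ) h₀, ∀ lam : ℝ, ∀ ψ : E3 → ℂ,
      IsMagEigenpair Ω ∅ A h lam ψ →
      lam ≤ Theta0 * h + err h →
      (∫ x in Ω,
          Real.exp (2 * α * Metric.infDist x (frontier Ω) / h ^ ((1:ℝ)/2)) * ‖ψ x‖ ^ 2)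
        ≤ C * l2sq Ω ψ := by
  obtain ⟨hα0, hα1⟩ := hα
  have hgap : α ^ 2 < 1 - Theta0 := (Real.lt_sqrt hα0.le).1 hα1
  obtain ⟨f, M, hM0, hf, hf0, hfd, hfe⟩ := agm_weight α hα0
  set δ := 1 - Theta0 - α ^ 2 with hδ
  have hδ0 : 0 < δ := by linarith
  have hbd := herr.bound (half_pos hδ0)
  rw [eventually_nhdsWithin_iff, Metric.eventually_nhds_iff] at hbd
  obtain ⟨h₀, hh₀, hbd⟩ := hbd
  refine ⟨Real.exp (2 * α) * (2 * M / δ + Real.exp (6 * α)), by positivity, h₀, hh₀, ?_⟩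
  intro h hh lam ψ hψ hlam
  obtain ⟨hh0, hhlt⟩ := hh
  have herrh : err h ≤ δ / 2 * h := by
    have := hbd (y := h) (by simpa [abs_of_pos hh0] using hhlt) hh0
    rw [Real.norm_of_nonneg hh0.le] at this
    exact (le_abs_self _).trans this
  rw [← Real.sqrt_eq_rpow]
  set r := Real.sqrt h with hr
  have hr0 : 0 < r := Real.sqrt_pos.2 hh0
  have hrr : r ^ 2 = h := Real.sq_sqrt hh0.le
  obtain ⟨d, hds, hdl, hdd⟩ := agm_mollify (fun x => Metric.infDist x Ωᶜ)
    (Metric.lipschitz_infDist_pt _) r hr0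
  set w : E3 → ℝ := fun x => f (d x / r) with hw
  have hws : ContDiff ℝ (⊤ : ℕ∞) w := hf.comp (hds.div_const r)
  have hsub : tsupport w ⊆ {x | r ≤ Metric.infDist x Ωᶜ} := by
    refine closure_minimal ?_ (isClosed_le continuous_const (Metric.continuous_infDist_pt _))
    intro x hx
    have h1 : ¬ d x / r ≤ 2 := fun hle => hx (hf0 _ hle)
    rw [div_le_iff₀ hr0] at h1
    have h2 := (abs_le.1 (hdd x)).2
    simp only [Set.mem_ofPred_eq]
    linarith
  have hwΩ : tsupport w ⊆ Ω := by
    intro x hx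
    by_contra hn
    have h1 : r ≤ Metric.infDist x Ωᶜ := hsub hx
    rw [Metric.infDist_zero_of_mem hn] at h1
    linarith
  have hwc : HasCompactSupport w :=
    Metric.isCompact_of_isClosed_isBounded (isClosed_tsupport w) (hΩb.subset hwΩ)
  have hloc := agm_local Ω hΩo A hA hcurl h lam ψ hψ w hws hwc hwΩ
  -- integrability
  have hψc : ContinuousOn (fun x => ‖ψ x‖ ^ 2) (closure Ω) := (hψ.2.1.1.continuousOn.norm).pow 2
  have hcpt : IsCompact (closure Ω) := hΩb.isCompact_closure
  have hI : ∀ g : E3 → ℝ, Continuous g → IntegrableOn (fun x => g x * ‖ψ x‖ ^ 2) Ω := fun g hg =>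
    ((hg.continuousOn.mul hψc).integrableOn_compact hcpt).mono_set subset_closure
  have hI1 : IntegrableOn (fun x => ‖ψ x‖ ^ 2) Ω :=
    (hψc.integrableOn_compact hcpt).mono_set subset_closure
  have hwcont : Continuous w := hws.continuous
  have hdw : ∀ x, h * ‖fderiv ℝ w x‖ ^ 2 ≤ α ^ 2 * w x ^ 2 + M := by
    intro x
    have hfx : HasDerivAt f (deriv f (d x / r)) (d x / r) :=
      ((hf.differentiable (by simp)) _).hasDerivAt
    have hdx : HasFDerivAt (fun y => d y / r) (r⁻¹ • fderiv ℝ d x) x := by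
      have := ((hds.differentiable (by simp)) x).hasFDerivAt.const_mul r⁻¹
      refine this.congr_of_eventuallyEq (Eventually.of_forall fun y => ?_)
      simp only; rw [div_eq_inv_mul]
    have := (hfx.comp_hasFDerivAt x hdx).fderiv
    have hw' : fderiv ℝ w x = deriv f (d x / r) • r⁻¹ • fderiv ℝ d x := this
    have hn : ‖fderiv ℝ d x‖ ≤ 1 := by
      simpa using norm_fderiv_le_of_lipschitz ℝ (x₀ := x) hdl
    have hn2 : ‖fderiv ℝ d x‖ ^ 2 ≤ 1 := by
      have := norm_nonneg (fderiv ℝ d x); nlinarith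
    refine le_trans ?_ (hfd (d x / r))
    rw [hw', norm_smul, norm_smul, mul_pow, mul_pow, ← hrr, Real.norm_eq_abs, sq_abs, norm_inv,
      Real.norm_eq_abs, inv_pow, sq_abs]
    have : r ^ 2 * (deriv f (d x / r) ^ 2 * ((r ^ 2)⁻¹ * ‖fderiv ℝ d x‖ ^ 2))
        = deriv f (d x / r) ^ 2 * ‖fderiv ℝ d x‖ ^ 2 := by field_simp
    rw [this]
    exact mul_le_of_le_one_right (sq_nonneg _) hn2
  have hgrad : h * ∫ x in Ω, ‖fderiv ℝ w x‖ ^ 2 * ‖ψ x‖ ^ 2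
      ≤ α ^ 2 * (∫ x in Ω, w x ^ 2 * ‖ψ x‖ ^ 2) + M * ∫ x in Ω, ‖ψ x‖ ^ 2 := by
    rw [← integral_const_mul, ← integral_const_mul, ← integral_const_mul,
      ← integral_add ((hI _ (by fun_prop)).const_mul _) (hI1.const_mul _)]
    have hc : Continuous (fderiv ℝ w) := hws.continuous_fderiv (by simp)
    refine setIntegral_mono_on ((hI _ (hc.norm.pow 2)).const_mul _)
      (((hI _ (by fun_prop)).const_mul _).add (hI1.const_mul _)) hΩo.measurableSet fun x _ => ?_
    have := mul_le_mul_of_nonneg_right (hdw x) (sq_nonneg ‖ψ x‖)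
    linarith
  set W := ∫ x in Ω, w x ^ 2 * ‖ψ x‖ ^ 2 with hWdef
  have hW0 : 0 ≤ W := integral_nonneg fun x => by positivity
  have hN0 : 0 ≤ ∫ x in Ω, ‖ψ x‖ ^ 2 := integral_nonneg fun x => by positivity
  have hWb : W ≤ 2 * M / δ * l2sq Ω ψ := by
    unfold l2sq
    set N := ∫ x in Ω, ‖ψ x‖ ^ 2
    have h1 : lam * W ≤ (Theta0 + δ / 2) * h * W := by
      apply mul_le_mul_of_nonneg_right _ hW0
      linarith
    have h2 := mul_le_mul_of_nonneg_left hgrad hh0.le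
    have h3 : h * (δ / 2 * W) ≤ h * (M * N) := by
      have : δ / 2 = 1 - (Theta0 + δ / 2) - α ^ 2 := by rw [hδ]; ring
      rw [this]
      nlinarith
    have h4 := le_of_mul_le_mul_left h3 hh0
    rw [div_mul_eq_mul_div, le_div_iff₀ hδ0]
    linarith
  have hpt : ∀ x ∈ Ω, Real.exp (2 * α * Metric.infDist x (frontier Ω) / r) * ‖ψ x‖ ^ 2
      ≤ Real.exp (2 * α) * (w x ^ 2 * ‖ψ x‖ ^ 2 + Real.exp (6 * α) * ‖ψ x‖ ^ 2) := by
    intro x hx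
    have h1 := agm_infDist Ω hΩb x hx
    have h2 := (abs_le.1 (hdd x)).1
    have h3 : Metric.infDist x (frontier Ω) / r ≤ d x / r + 1 := by
      rw [div_add_one hr0.ne']
      gcongr
      linarith
    have h4 : Real.exp (2 * α * Metric.infDist x (frontier Ω) / r)
        ≤ Real.exp (2 * α) * Real.exp (2 * α * (d x / r)) := by
      rw [← Real.exp_add, Real.exp_le_exp, mul_div_assoc]
      have := mul_le_mul_of_nonneg_left h3 (by positivity : 0 ≤ 2 * α)
      linarith
    have h5 := h4.trans (mul_le_mul_of_nonneg_left (hfe (d x / r)) (Real.exp_pos (2 * α)).le)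
    have h6 := mul_le_mul_of_nonneg_right h5 (sq_nonneg ‖ψ x‖)
    refine h6.trans (le_of_eq ?_)
    simp only [hw]; ring
  have hcontL : Continuous (fun x : E3 => Real.exp (2 * α * Metric.infDist x (frontier Ω) / r)) := by
    have := Metric.continuous_infDist_pt (frontier Ω)
    fun_prop
  have hIw : IntegrableOn (fun x => w x ^ 2 * ‖ψ x‖ ^ 2) Ω := hI _ (by fun_prop)
  have hIr : IntegrableOn (fun x => Real.exp (2 * α) *
      (w x ^ 2 * ‖ψ x‖ ^ 2 + Real.exp (6 * α) * ‖ψ x‖ ^ 2)) Ω :=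
    Integrable.const_mul (Integrable.add hIw (hI1.const_mul (Real.exp (6 * α)))) _
  calc _ ≤ ∫ x in Ω, Real.exp (2 * α) * (w x ^ 2 * ‖ψ x‖ ^ 2 + Real.exp (6 * α) * ‖ψ x‖ ^ 2) :=
        setIntegral_mono_on (hI _ hcontL) hIr hΩo.measurableSet hpt
    _ = Real.exp (2 * α) * (W + Real.exp (6 * α) * l2sq Ω ψ) := by
        rw [integral_const_mul, integral_add hIw (hI1.const_mul _), integral_const_mul]
        rfl
    _ ≤ Real.exp (2 * α) * (2 * M / δ * l2sq Ω ψ + Real.exp (6 * α) * l2sq Ω ψ) := by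
        gcongr
    _ = _ := by ring
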